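/- Let i, j ≥ 1 be integers with i + j even. Then every complex root of the polynomial Z_i·Z_j − 1 is real if and only if i = j. Moreover, when i = j, the polynomial Z_j² − 1 factors completely over ℝ as Π_{k=1}^{j} (X − 4·cos²(πk/(2j)))·(X − 4·cos²(πk/(2j+2))). -/

import Mathlib

open Polynomial Real

/-- The polynomial sequence `Z`: `Z 0 = 1`, `Z 1 = X - 1`,
`Z n = (X - 2) * Z (n-1) - Z (n-2)` for `n ≥ 2`. -/
noncomputable def Z : ℕ → Polynomial ℝ
  | 0 => 1
  | 1 => X - 1
  | n + 2 => (X - 2) * Z (n + 1) - Z n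

lemma Z_monic (n : ℕ) : ((Z n).Monic ∧ (Z n).natDegree = n) ∧
    ((Z (n+1)).Monic ∧ (Z (n+1)).natDegree = n+1) := by
  induction n with
  | zero =>
    refine ⟨⟨by simp [Z], by simp [Z]⟩, ?_, ?_⟩
    · simpa [Z] using monic_X_sub_C (1:ℝ)
    · simpa [Z] using natDegree_X_sub_C (1:ℝ)
  | succ n ih =>
    obtain ⟨⟨h1, h2⟩, h3, h4⟩ := ih
    have hx : (X - 2 : ℝ[X]) = X - C 2 := by rw [map_ofNat C 2]
    have m : ((X - 2) * Z (n+1)).Monic := by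
      rw [hx]; exact (monic_X_sub_C _).mul h3
    have d : ((X - 2) * Z (n+1)).natDegree = n + 2 := by
      rw [hx, (monic_X_sub_C (2:ℝ)).natDegree_mul h3, h4, natDegree_X_sub_C]; ring
    have lt : (Z n).natDegree < ((X - 2) * Z (n+1)).natDegree := by omega
    refine ⟨⟨h3, h4⟩, ?_, ?_⟩
    · rw [Z]
      exact m.sub_of_left (degree_lt_degree lt)
    · rw [Z, natDegree_sub_eq_left_of_natDegree_lt lt, d]

lemma Z_sin (t : ℝ) (n : ℕ) : (Z n).eval (4 * cos t ^ 2) * sin t = sin ((2 * n + 1) * t) ∧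
    (Z (n+1)).eval (4 * cos t ^ 2) * sin t = sin ((2 * (n + 1 : ℕ) + 1) * t) := by
  induction n with
  | zero =>
    constructor
    · simp [Z]
    · have : (2 * ((0 + 1 : ℕ):ℝ) + 1) * t = 3 * t := by push_cast; ring
      rw [this, sin_three_mul]
      simp [Z]
      have := sin_sq_add_cos_sq t
      linear_combination (4 * sin t) * this
  | succ n ih =>
    refine ⟨ih.2, ?_⟩
    rw [Z]
    have e1 : (2 * ((n + 1 + 1 : ℕ):ℝ) + 1) * t = (2 * ((n + 1 : ℕ):ℝ) + 1) * t + 2 * t := by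
      push_cast; ring
    have e2 : (2 * (n:ℝ) + 1) * t = (2 * ((n + 1 : ℕ):ℝ) + 1) * t - 2 * t := by
      push_cast; ring
    have h1 := ih.1
    have h2 := ih.2
    rw [e2, sin_sub] at h1
    rw [e1, sin_add]
    simp only [eval_sub, eval_mul, eval_X, eval_ofNat]
    rw [cos_two_mul] at *
    linear_combination (4 * cos t ^ 2 - 2) * h2 - h1

lemma Z_cos (t : ℝ) (n : ℕ) :
    (Z n).eval (4 * sin t ^ 2) * cos t = (-1) ^ n * cos ((2 * n + 1) * t) := by
  have h := (Z_sin (π / 2 - t) n).1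
  rw [cos_pi_div_two_sub, sin_pi_div_two_sub] at h
  rw [h]
  have : (2 * (n:ℝ) + 1) * (π / 2 - t) = (π / 2 - (2 * n + 1) * t) + n * π := by ring
  rw [this, sin_add_nat_mul_pi, sin_pi_div_two_sub]

lemma cos_inj_aux {a b : ℝ} (ha : 0 ≤ a) (ha' : a ≤ π / 2) (hb : 0 ≤ b) (hb' : b ≤ π / 2)
    (h : 4 * cos a ^ 2 = 4 * cos b ^ 2) : a = b := by
  have h1 : 0 ≤ cos a := cos_nonneg_of_neg_pi_div_two_le_of_le (by linarith) ha'
  have h2 : 0 ≤ cos b := cos_nonneg_of_neg_pi_div_two_le_of_le (by linarith) hb'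
  have h3 : cos a = cos b := by
    apply (sq_eq_sq₀ h1 h2).1; linarith
  exact injOn_cos ⟨ha, by linarith [pi_pos]⟩ ⟨hb, by linarith [pi_pos]⟩ h3

lemma root_aux (j : ℕ) (t : ℝ) (h : sin t ≠ 0) (h2 : sin (2 * j * t) * sin ((2 * j + 2) * t) = 0) :
    (Z j * Z j - 1).eval (4 * cos t ^ 2) = 0 := by
  have h1 := (Z_sin t j).1
  have e1 : 2 * j * t = (2 * j + 1) * t - t := by ring
  have e2 : (2 * j + 2) * t = (2 * j + 1) * t + t := by ring
  rw [e1, e2, sin_sub, sin_add] at h2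
  have h3 := sin_sq_add_cos_sq t
  have h4 := sin_sq_add_cos_sq ((2 * j + 1) * t)
  have : (Z j * Z j - 1).eval (4 * cos t ^ 2) * sin t ^ 2 = 0 := by
    simp only [eval_sub, eval_mul, eval_one]
    have : (eval (4 * cos t ^ 2) (Z j) * sin t) ^ 2 - sin t ^ 2 = 0 := by
      rw [h1]
      linear_combination h2 + (-sin ((2 * j + 1) * t) ^ 2) * h3 + sin t ^ 2 * h4
    linear_combination this
  simpa [h] using this

lemma coprime_aux {a b : ℝ} (h : a ≠ b) : IsCoprime (X - C a) (X - C b) :=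
  isCoprime_X_sub_C_of_isUnit_sub (sub_ne_zero.2 h).isUnit

lemma factor (j : ℕ) (hj : 1 ≤ j) : Z j * Z j - 1 = ∏ k ∈ Finset.Icc 1 j,
        (X - Polynomial.C (4 * Real.cos (π * k / (2 * j)) ^ 2)) *
          (X - Polynomial.C (4 * Real.cos (π * k / (2 * j + 2)) ^ 2)) := by
  have hj' : (1:ℝ) ≤ j := by exact_mod_cast hj
  have hp := pi_pos
  have rA : ∀ k ∈ Finset.Icc 1 j, 0 < π * k / (2 * j) ∧ π * k / (2 * j) ≤ π / 2 := by
    intro k hk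
    rw [Finset.mem_Icc] at hk
    have k1 : (1:ℝ) ≤ k := by exact_mod_cast hk.1
    have k2 : (k:ℝ) ≤ j := by exact_mod_cast hk.2
    refine ⟨by positivity, ?_⟩
    rw [div_le_div_iff₀ (by positivity) (by norm_num)]
    nlinarith
  have rB : ∀ k ∈ Finset.Icc 1 j, 0 < π * k / (2 * j + 2) ∧ π * k / (2 * j + 2) ≤ π / 2 := by
    intro k hk
    rw [Finset.mem_Icc] at hk
    have k1 : (1:ℝ) ≤ k := by exact_mod_cast hk.1
    have k2 : (k:ℝ) ≤ j := by exact_mod_cast hk.2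
    refine ⟨by positivity, ?_⟩
    rw [div_le_div_iff₀ (by positivity) (by norm_num)]
    nlinarith
  have sn : ∀ t, 0 < t ∧ t ≤ π / 2 → sin t ≠ 0 := fun t ht =>
    (sin_pos_of_pos_of_lt_pi ht.1 (by linarith)).ne'
  have dvdA : (∏ k ∈ Finset.Icc 1 j, (X - C (4 * cos (π * k / (2 * j)) ^ 2))) ∣ Z j * Z j - 1 := by
    apply Finset.prod_dvd_of_coprime
    · intro k hk l hl hkl
      apply coprime_aux
      intro h
      have h' := cos_inj_aux (rA k hk).1.le (rA k hk).2 (rA l hl).1.le (rA l hl).2 h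
      field_simp at h'
      exact hkl (by exact_mod_cast h')
    · intro k hk
      rw [dvd_iff_isRoot]
      apply root_aux _ _ (sn _ (rA k hk))
      have : 2 * j * (π * k / (2 * j)) = k * π := by field_simp
      rw [this, sin_nat_mul_pi, zero_mul]
  have dvdB : (∏ k ∈ Finset.Icc 1 j, (X - C (4 * cos (π * k / (2 * j + 2)) ^ 2))) ∣ Z j * Z j - 1 := by
    apply Finset.prod_dvd_of_coprime
    · intro k hk l hl hkl
      apply coprime_aux
      intro h
      have h' := cos_inj_aux (rB k hk).1.le (rB k hk).2 (rB l hl).1.le (rB l hl).2 h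
      field_simp at h'
      exact hkl (by exact_mod_cast h')
    · intro k hk
      rw [dvd_iff_isRoot]
      apply root_aux _ _ (sn _ (rB k hk))
      have : (2 * j + 2) * (π * k / (2 * j + 2)) = k * π := by field_simp
      rw [this, sin_nat_mul_pi, mul_zero]
  have cop : IsCoprime (∏ k ∈ Finset.Icc 1 j, (X - C (4 * cos (π * k / (2 * j)) ^ 2)))
      (∏ k ∈ Finset.Icc 1 j, (X - C (4 * cos (π * k / (2 * j + 2)) ^ 2))) := by
    apply IsCoprime.prod_left
    intro k hk
    apply IsCoprime.prod_right
    intro l hl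
    apply coprime_aux
    intro h
    have h' := cos_inj_aux (rA k hk).1.le (rA k hk).2 (rB l hl).1.le (rB l hl).2 h
    rw [div_eq_div_iff (by positivity) (by positivity)] at h'
    have h2 : (k:ℝ) * (j + 1) = l * j := by
      apply mul_left_cancel₀ (mul_pos two_pos hp).ne'
      linear_combination h'
    have h3 : k * (j + 1) = l * j := by exact_mod_cast h2
    rw [Finset.mem_Icc] at hk hl
    have : k < l := by
      by_contra hc
      push Not at hc
      nlinarith
    nlinarith
  have dvd := cop.mul_dvd dvdA dvdB
  rw [← Finset.prod_mul_distrib] at dvd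
  have hm := (Z_monic j).1
  have hdeg : (Z j * Z j).natDegree = 2 * j := by
    rw [hm.1.natDegree_mul hm.1, hm.2]; ring
  have lt : (1 : ℝ[X]).natDegree < (Z j * Z j).natDegree := by
    rw [hdeg, natDegree_one]; omega
  have mon : (Z j * Z j - 1).Monic := (hm.1.mul hm.1).sub_of_left (degree_lt_degree lt)
  have mf : ∀ k ∈ Finset.Icc 1 j, ((X - Polynomial.C (4 * Real.cos (π * k / (2 * j)) ^ 2)) *
          (X - Polynomial.C (4 * Real.cos (π * k / (2 * j + 2)) ^ 2))).Monic := fun k _ =>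
    (monic_X_sub_C _).mul (monic_X_sub_C _)
  refine eq_of_monic_of_dvd_of_natDegree_le (monic_prod_of_monic _ _ mf) mon dvd ?_
  rw [natDegree_sub_eq_left_of_natDegree_lt lt, hdeg, natDegree_prod_of_monic _ _ mf]
  have : ∀ k ∈ Finset.Icc 1 j, ((X - Polynomial.C (4 * Real.cos (π * k / (2 * j)) ^ 2)) *
          (X - Polynomial.C (4 * Real.cos (π * k / (2 * j + 2)) ^ 2))).natDegree = 2 := fun k _ => by
    rw [(monic_X_sub_C _).natDegree_mul (monic_X_sub_C _), natDegree_X_sub_C, natDegree_X_sub_C]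
  rw [Finset.sum_congr rfl this]
  simp [mul_comm]

lemma no_three (P : ℝ[X]) (hs : P.Splits) (hd : 0 < P.natDegree) {u v w : ℝ} (huv : u < v)
    (hvw : v < w) (e1 : P.eval u = P.eval v) (e2 : P.eval v = P.eval w)
    (h0 : ∀ x ∈ Set.Icc u w, P.eval x ≠ 0) : False := by
  obtain ⟨s, hs1, hs2⟩ := exists_deriv_eq_zero huv P.continuous.continuousOn e1
  obtain ⟨t, ht1, ht2⟩ := exists_deriv_eq_zero hvw P.continuous.continuousOn e2
  rw [Polynomial.deriv] at hs2 ht2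
  have ms : s ∈ Set.Icc u w := ⟨hs1.1.le, by linarith [hs1.2]⟩
  have mt : t ∈ Set.Icc u w := ⟨by linarith [ht1.1], ht1.2.le⟩
  have hst : s < t := hs1.2.trans ht1.1
  have es := hs.eval_derivative_div_eval_of_ne_zero (h0 s ms)
  have et := hs.eval_derivative_div_eval_of_ne_zero (h0 t mt)
  rw [hs2, zero_div] at es
  rw [ht2, zero_div] at et
  have hne : P.roots ≠ ∅ := by
    intro h
    have := hs.natDegree_eq_card_roots
    rw [h] at this
    simp at this
    omega
  have := Multiset.sum_lt_sum_of_nonempty (s := P.roots) (f := fun z => 1 / (t - z))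
    (g := fun z => 1 / (s - z)) hne (by
      intro a ha
      have ra : P.eval a = 0 := (mem_roots'.1 ha).2
      have hna : a ∉ Set.Icc u w := fun h => h0 a h ra
      rcases lt_or_ge a u with h | h
      · exact one_div_lt_one_div_of_lt (by linarith [ms.1]) (by linarith)
      · have h' : w < a := by
          by_contra hc
          exact hna ⟨h, not_lt.1 hc⟩
        exact one_div_lt_one_div_of_neg_of_lt (by linarith [mt.2]) (by linarith))
  rw [← es, ← et] at this
  exact lt_irrefl _ this

lemma Zprod (i D : ℕ) (t : ℝ) :
    (Z i * Z (i + 2 * D) - 1).eval (4 * sin t ^ 2) * cos t ^ 2 =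
      cos ((2 * i + 1) * t) * cos ((2 * (i + 2 * D : ℕ) + 1) * t) - cos t ^ 2 := by
  have h1 := Z_cos t i
  have h2 := Z_cos t (i + 2 * D)
  have hs : ((-1 : ℝ)) ^ i * (-1) ^ (i + 2 * D) = 1 := by
    rw [← pow_add]; exact Even.neg_one_pow ⟨i + D, by ring⟩
  simp only [eval_sub, eval_mul, eval_one]
  calc _ = (eval (4 * sin t ^ 2) (Z i) * cos t) * (eval (4 * sin t ^ 2) (Z (i + 2 * D)) * cos t)
        - cos t ^ 2 := by ring
    _ = _ := by
      rw [h1, h2]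
      linear_combination (cos ((2 * i + 1) * t) * cos ((2 * (i + 2 * D : ℕ) + 1) * t)) * hs

lemma neg_aux (i D : ℕ) (hi : 1 ≤ i) (hD : 1 ≤ D) (t : ℝ) (ht : 0 < t)
    (ht' : t * (i + D + 1) < π) :
    (Z i * Z (i + 2 * D) - 1).eval (4 * sin t ^ 2) < 0 := by
  have i1 : (1:ℝ) ≤ i := by exact_mod_cast hi
  have D1 : (1:ℝ) ≤ D := by exact_mod_cast hD
  have hp := pi_pos
  have ht3 : t * 3 < π := by nlinarith
  have hc : 0 < cos t := cos_pos_of_mem_Ioo ⟨by linarith, by linarith⟩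
  have hz := Zprod i D t
  have hneg : cos ((2 * i + 1) * t) * cos ((2 * (i + 2 * D : ℕ) + 1) * t) - cos t ^ 2 < 0 := by
    set A := ((i:ℝ) + D) * (2 * t) with hA
    set B := (D:ℝ) * (2 * t) with hB
    have e1 : (2 * (i:ℝ) + 1) * t = (A + t) - B := by rw [hA, hB]; ring
    have e2 : (2 * ((i + 2 * D : ℕ):ℝ) + 1) * t = (A + t) + B := by
      rw [hA, hB]; push_cast; ring
    have id1 : cos ((2 * i + 1) * t) * cos ((2 * (i + 2 * D : ℕ) + 1) * t)
        = cos (A + t) ^ 2 - sin B ^ 2 := by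
      rw [e1, e2, cos_sub (A + t) B, cos_add (A + t) B]
      have h3 := sin_sq_add_cos_sq (A + t)
      have h4 := sin_sq_add_cos_sq B
      linear_combination (-sin B ^ 2) * h3 + cos (A + t) ^ 2 * h4
    rw [id1]
    rcases le_or_gt A π with h | h
    · have hB1 : 2 * t ≤ B := by nlinarith
      have hB2 : B ≤ π - 2 * t := by nlinarith
      have hs : sin t < sin B := by
        rcases le_or_gt B (π / 2) with h5 | h5
        · exact sin_lt_sin_of_lt_of_le_pi_div_two (by linarith) h5 (by linarith)
        · rw [← sin_pi_sub B]
          exact sin_lt_sin_of_lt_of_le_pi_div_two (by linarith) (by linarith) (by linarith)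
      have hst : 0 < sin t := sin_pos_of_pos_of_lt_pi ht (by linarith)
      have h3 := sin_sq_add_cos_sq t
      have h4 := cos_sq_le_one (A + t)
      nlinarith
    · have id2 : cos (A + t) ^ 2 - cos t ^ 2 = - (sin A * sin (A + 2 * t)) := by
        have : A + 2 * t = (A + t) + t := by ring
        rw [this]
        have : sin A = sin ((A + t) - t) := by congr 1; ring
        rw [this, sin_sub (A + t) t, sin_add (A + t) t]
        have h3 := sin_sq_add_cos_sq (A + t)
        have h4 := sin_sq_add_cos_sq t
        linear_combination cos t ^ 2 * h3 - cos (A + t) ^ 2 * h4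
      have hA2 : A + 2 * t < 2 * π := by rw [hA]; nlinarith
      have s1 : sin A < 0 := by
        rw [← neg_pos, ← sin_sub_pi A]
        exact sin_pos_of_pos_of_lt_pi (by linarith) (by linarith)
      have s2 : sin (A + 2 * t) < 0 := by
        rw [← neg_pos, ← sin_sub_pi (A + 2 * t)]
        exact sin_pos_of_pos_of_lt_pi (by linarith) (by linarith)
      nlinarith [mul_pos_of_neg_of_neg s1 s2, sq_nonneg (sin B)]
  rw [← hz] at hneg
  by_contra hcon
  push Not at hcon
  nlinarith [mul_nonneg hcon (sq_nonneg (cos t))]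

lemma three_angles (i D : ℕ) (hi : 1 ≤ i) (hD : 1 ≤ D) (hs : (Z i * Z (i + 2 * D) - 1).Splits)
    {a b c : ℝ} (ha : 0 < a) (hab : a < b) (hbc : b < c) (hc : c * (i + D + 1) < π)
    (za : cos ((2 * i + 1) * a) * cos ((2 * (i + 2 * D : ℕ) + 1) * a) = 0)
    (zb : cos ((2 * i + 1) * b) * cos ((2 * (i + 2 * D : ℕ) + 1) * b) = 0)
    (zc : cos ((2 * i + 1) * c) * cos ((2 * (i + 2 * D : ℕ) + 1) * c) = 0) : False := by
  have i1 : (1:ℝ) ≤ i := by exact_mod_cast hi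
  have D1 : (1:ℝ) ≤ D := by exact_mod_cast hD
  have hp := pi_pos
  have hc3 : c * 3 < π := by nlinarith
  have hval : ∀ t, 0 < t → t ≤ c →
      cos ((2 * i + 1) * t) * cos ((2 * (i + 2 * D : ℕ) + 1) * t) = 0 →
      (Z i * Z (i + 2 * D) - 1).eval (4 * sin t ^ 2) = -1 := by
    intro t h0 h1 h2
    have h := Zprod i D t
    rw [h2] at h
    have hct : 0 < cos t := cos_pos_of_mem_Ioo ⟨by linarith, by linarith⟩
    apply mul_right_cancel₀ (pow_pos hct 2).ne'
    rw [h]; ring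
  have hmono : ∀ s t, 0 < s → s < t → t ≤ c → 4 * sin s ^ 2 < 4 * sin t ^ 2 := by
    intro s t h0 h1 h2
    have h3 : 0 < sin s := sin_pos_of_pos_of_lt_pi h0 (by linarith)
    have h4 : sin s < sin t :=
      sin_lt_sin_of_lt_of_le_pi_div_two (by linarith) (by linarith) h1
    nlinarith
  have ea := hval a ha (by linarith) za
  have eb := hval b (by linarith) (by linarith) zb
  have ec := hval c (by linarith) le_rfl zc
  have hm := (Z_monic i).1
  have hm' := (Z_monic (i + 2 * D)).1
  have hdeg : (Z i * Z (i + 2 * D)).natDegree = i + (i + 2 * D) := by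
    rw [hm.1.natDegree_mul hm'.1, hm.2, hm'.2]
  have lt : (1 : ℝ[X]).natDegree < (Z i * Z (i + 2 * D)).natDegree := by
    rw [hdeg, natDegree_one]; omega
  refine no_three _ hs ?_ (hmono a b ha hab hbc.le) (hmono b c (by linarith) hbc le_rfl)
    (ea.trans eb.symm) (eb.trans ec.symm) ?_
  · rw [natDegree_sub_eq_left_of_natDegree_lt lt, hdeg]; omega
  · intro x hx
    have hcont : ContinuousOn (fun t : ℝ => 4 * sin t ^ 2) (Set.Icc a c) := by fun_prop
    obtain ⟨t, ht, rfl⟩ := intermediate_value_Icc (by linarith) hcont hx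
    refine (neg_aux i D hi hD t (by linarith [ht.1]) ?_).ne
    nlinarith [ht.2]

lemma not_splits (i D : ℕ) (hi : 1 ≤ i) (hD : 1 ≤ D) :
    ¬ (Z i * Z (i + 2 * D) - 1).Splits := by
  intro hs
  have i1 : (1:ℝ) ≤ i := by exact_mod_cast hi
  have D1 : (1:ℝ) ≤ D := by exact_mod_cast hD
  have hp := pi_pos
  have J : ((i + 2 * D : ℕ) : ℝ) = i + 2 * D := by push_cast; ring
  have pj : (0:ℝ) < 2 * (i + 2 * D) + 1 := by positivity
  have pI : (0:ℝ) < 2 * i + 1 := by positivity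
  have zj : ∀ m : ℕ, cos ((2 * i + 1) * ((2 * m + 1) * π / (2 * (2 * (i + 2 * D) + 1)))) *
      cos ((2 * (i + 2 * D : ℕ) + 1) * ((2 * m + 1) * π / (2 * (2 * (i + 2 * D) + 1)))) = 0 := by
    intro m
    have : cos ((2 * (i + 2 * D : ℕ) + 1) * ((2 * m + 1) * π / (2 * (2 * (i + 2 * D) + 1)))) = 0 := by
      rw [cos_eq_zero_iff]
      refine ⟨m, ?_⟩
      rw [J]; push_cast; field_simp
    rw [this, mul_zero]
  have zi : cos ((2 * i + 1) * (π / (2 * (2 * i + 1)))) *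
      cos ((2 * (i + 2 * D : ℕ) + 1) * (π / (2 * (2 * i + 1)))) = 0 := by
    have : (2 * (i:ℝ) + 1) * (π / (2 * (2 * i + 1))) = π / 2 := by field_simp
    rw [this, cos_pi_div_two, zero_mul]
  have z0 := zj 0
  have z1 := zj 1
  have z2 := zj 2
  have o01 : (2 * (0:ℕ) + 1) * π / (2 * (2 * ((i:ℝ) + 2 * D) + 1)) <
      (2 * (1:ℕ) + 1) * π / (2 * (2 * (i + 2 * D) + 1)) := by
    gcongr; norm_num
  have o12 : (2 * (1:ℕ) + 1) * π / (2 * (2 * ((i:ℝ) + 2 * D) + 1)) <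
      (2 * (2:ℕ) + 1) * π / (2 * (2 * (i + 2 * D) + 1)) := by
    gcongr; norm_num
  have o0i : (2 * (0:ℕ) + 1) * π / (2 * (2 * ((i:ℝ) + 2 * D) + 1)) < π / (2 * (2 * i + 1)) := by
    rw [div_lt_div_iff₀ (by positivity) (by positivity)]
    push_cast
    nlinarith
  have p0 : 0 < (2 * (0:ℕ) + 1) * π / (2 * (2 * ((i:ℝ) + 2 * D) + 1)) := by positivity
  have b1 : (2 * (1:ℕ) + 1) * π / (2 * (2 * ((i:ℝ) + 2 * D) + 1)) * (i + D + 1) < π := by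
    rw [div_mul_eq_mul_div, div_lt_iff₀ (by positivity)]
    push_cast
    nlinarith
  by_cases h7 : i + 2 * D < 7 * i + 2
  · have h7' : (i:ℝ) + 2 * D < 7 * i + 2 := by exact_mod_cast h7
    have bi : π / (2 * (2 * (i:ℝ) + 1)) * (i + D + 1) < π := by
      rw [div_mul_eq_mul_div, div_lt_iff₀ (by positivity)]
      nlinarith
    rcases lt_trichotomy (π / (2 * (2 * (i:ℝ) + 1)))
      ((2 * (1:ℕ) + 1) * π / (2 * (2 * ((i:ℝ) + 2 * D) + 1))) with h | h | h
    · exact three_angles i D hi hD hs p0 o0i h b1 z0 zi z1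
    · rw [div_eq_div_iff (by positivity) (by positivity)] at h
      have h2 : 2 * ((i:ℝ) + 2 * D) + 1 = 3 * (2 * i + 1) := by
        apply mul_left_cancel₀ (mul_pos two_pos hp).ne'
        push_cast at h
        linear_combination h
      have h3 : 2 * (i + 2 * D) + 1 = 3 * (2 * i + 1) := by exact_mod_cast h2
      omega
    · exact three_angles i D hi hD hs p0 o01 h bi z0 z1 zi
  · have h7' : 7 * (i:ℝ) + 2 ≤ i + 2 * D := by exact_mod_cast not_lt.1 h7
    refine three_angles i D hi hD hs p0 o01 o12 ?_ z0 z1 z2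
    rw [div_mul_eq_mul_div, div_lt_iff₀ (by positivity)]
    push_cast
    nlinarith

lemma splits_of_real (P : ℝ[X]) (h : ∀ z : ℂ, (Polynomial.aeval z) P = 0 → z.im = 0) :
    P.Splits := by
  refine Splits.of_splits_map (algebraMap ℝ ℂ) (IsAlgClosed.splits _) ?_
  intro a ha
  have h1 := (mem_roots'.1 ha).2
  rw [IsRoot.def, eval_map_algebraMap] at h1
  exact ⟨a.re, Complex.ext (by simp) (by simp [h a h1])⟩

theorem ZZ_sub_one_real_roots_iff (i j : ℕ) (hi : 1 ≤ i) (hj : 1 ≤ j)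
    (hpar : Even (i + j)) :
    ((∀ z : ℂ, (Polynomial.aeval z) (Z i * Z j - 1) = 0 → z.im = 0) ↔ i = j) ∧
    (i = j →
      Z i * Z j - 1 = ∏ k ∈ Finset.Icc 1 j,
        (X - Polynomial.C (4 * Real.cos (π * k / (2 * j)) ^ 2)) *
          (X - Polynomial.C (4 * Real.cos (π * k / (2 * j + 2)) ^ 2))) := by
  refine ⟨⟨?_, ?_⟩, ?_⟩
  · intro h
    have hs := splits_of_real _ h
    obtain ⟨r, hr⟩ := hpar
    rcases lt_trichotomy i j with hij | hij | hij
    · obtain ⟨D, rfl⟩ : ∃ D, j = i + 2 * D := ⟨r - i, by omega⟩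
      exact absurd hs (not_splits i D hi (by omega))
    · exact hij
    · obtain ⟨D, rfl⟩ : ∃ D, i = j + 2 * D := ⟨r - j, by omega⟩
      rw [mul_comm] at hs
      exact absurd hs (not_splits j D hj (by omega))
  · rintro rfl z hz
    rw [factor i hi, map_prod, Finset.prod_eq_zero_iff] at hz
    obtain ⟨k, -, hk⟩ := hz
    rw [map_mul, mul_eq_zero] at hk
    rcases hk with hk | hk <;>
    · rw [map_sub, aeval_X, aeval_C, sub_eq_zero] at hk
      rw [hk]
      exact Complex.ofReal_im _
  · rintro rfl
    exact factor i hi
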